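/- Let ν ≥ 2 be an integer, let L be the normalized inverse-linear loss with parameters a, b ≥ 0, (a,b) ≠ (0,0), and consider the estimator p̂ = Ω/(N+d) with Ω > 0 and d > −ν. Then lim_{p→0⁺} R(p) = bΩ γ(ν−1, Ω)/(ν−1) + (a−b) γ(ν, Ω) − aν γ(ν+1, Ω)/Ω + a(ν/Ω − 1). -/

import Mathlib

open Real Filter Set

/-- Negative binomial probability function. -/
noncomputable def negBinomPMF (ν : ℕ) (p : ℝ) (n : ℕ) : ℝ :=
  (Nat.choose (n - 1) (ν - 1) : ℝ) * p ^ ν * (1 - p) ^ (n - ν)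

/-- Risk of the estimator `g` under loss `L` in inverse binomial sampling. -/
noncomputable def risk (ν : ℕ) (L : ℝ → ℝ) (g : ℕ → ℝ) (p : ℝ) : ℝ :=
  ∑' n : ℕ, if ν ≤ n then negBinomPMF ν p n * L (g n / p) else 0

/-- Normalized inverse-linear loss. -/
noncomputable def invLinLoss (a b x : ℝ) : ℝ :=
  if x ≤ 1 then a * (1 / x - 1) else b * (x - 1)

/-- Normalized lower incomplete gamma function. -/
noncomputable def lowerGamma (t u : ℝ) : ℝ :=
  (∫ s in (0:ℝ)..u, s ^ (t - 1) * Real.exp (-s)) / Real.Gamma t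

/-!
Dividing the negative binomial weight of `n` by `p` gives the binomial probability of `ν - 1`
successes in `n - 1` trials. With `n = ⌊x / p⌋` the Poisson limit therefore turns it into the
density at `x` of a Gamma variable `X` of shape `ν`, while `g n / p` tends to `Ω / x` because
`n * g n` tends to `Ω`. The risk is the integral over `x` of the corresponding step function,
which is dominated by an integrable function because `n * g n` is bounded above and away from zero
and `(1 - p) ^ (n - ν) ≤ exp (ν + 1) * exp (-x)`. So the risk converges to the expectation of
`L (Ω / X)`. For the inverse-linear loss, splitting this expectation at `x = Ω` and absorbing the
factors `x` and `1 / x` into the density by a shift of its shape parameter gives the closed form.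
-/

open MeasureTheory ProbabilityTheory Asymptotics
open scoped Topology

section StepFunction

variable {E : Type*} [NormedAddCommGroup E] [NormedSpace ℝ E] [CompleteSpace E] {f : ℕ → E}

lemma hasSum_integral_floor (hf : IntegrableOn (fun x : ℝ => f ⌊x⌋₊) (Ioi 0)) :
    HasSum f (∫ x in Ioi (0 : ℝ), f ⌊x⌋₊) := by
  have hUnion : ⋃ n : ℕ, Ico (n : ℝ) (n + 1) = Ici 0 := by
    ext x
    simp only [mem_iUnion, mem_Ici]
    constructor
    · rintro ⟨n, hn, -⟩
      exact n.cast_nonneg.trans hn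
    · exact fun hx => ⟨⌊x⌋₊, Nat.floor_le hx, Nat.lt_floor_add_one x⟩
  have hDisjoint : Pairwise (Function.onFun Disjoint fun n : ℕ => Ico (n : ℝ) (n + 1)) := by
    intro m n hmn
    refine disjoint_left.2 fun x hm hn => hmn ?_
    rw [← Nat.floor_eq_on_Ico m x hm, Nat.floor_eq_on_Ico n x hn]
  have hPiece (n : ℕ) : ∫ x in Ico (n : ℝ) (n + 1), f ⌊x⌋₊ = f n := by
    rw [setIntegral_congr_fun measurableSet_Ico
      fun x hx => congrArg f (Nat.floor_eq_on_Ico n x hx)]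
    simp
  rw [← integrableOn_Ici_iff_integrableOn_Ioi, ← hUnion] at hf
  rw [← integral_Ici_eq_integral_Ioi, ← hUnion]
  simpa only [hPiece] using hasSum_integral_iUnion (fun _ => measurableSet_Ico) hDisjoint hf

lemma tsum_eq_integral_floor_div {p : ℝ} (hp : 0 < p)
    (hf : IntegrableOn (fun x : ℝ => p⁻¹ • f ⌊x / p⌋₊) (Ioi 0)) :
    ∑' n, f n = ∫ x in Ioi (0 : ℝ), p⁻¹ • f ⌊x / p⌋₊ := by
  simp only [div_eq_mul_inv] at hf ⊢
  have hf' : IntegrableOn (fun x : ℝ => p⁻¹ • f ⌊x⌋₊) (Ioi 0) := by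
    simpa using (integrableOn_Ioi_comp_mul_right_iff (fun x : ℝ => p⁻¹ • f ⌊x⌋₊) 0
      (inv_pos.2 hp)).1 hf
  have hInt : IntegrableOn (fun x : ℝ => f ⌊x⌋₊) (Ioi 0) := by
    simpa only [IntegrableOn, Pi.smul_def, smul_inv_smul₀ hp.ne'] using hf'.smul p
  rw [(hasSum_integral_floor hInt).tsum_eq, integral_smul,
    integral_comp_mul_right_Ioi' (fun x : ℝ => f ⌊x⌋₊) 0 (inv_pos.2 hp), zero_mul]

end StepFunction

section Gamma

variable {t x u : ℝ}

lemma gammaPDFReal_one_of_nonneg (hx : 0 ≤ x) :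
    gammaPDFReal t 1 x = x ^ (t - 1) * exp (-x) / Gamma t := by
  rw [gammaPDFReal, if_pos hx, one_rpow, one_mul]
  ring

lemma mul_gammaPDFReal_one (ht : t ≠ 0) (hx : 0 < x) :
    x * gammaPDFReal t 1 x = t * gammaPDFReal (t + 1) 1 x := by
  rw [gammaPDFReal_one_of_nonneg hx.le, gammaPDFReal_one_of_nonneg hx.le, Gamma_add_one ht,
    add_sub_cancel_right, rpow_sub_one hx.ne']
  field_simp

lemma integrableOn_rpow_mul_gammaPDFReal_one {s : ℝ} (hst : 0 < s + t) :
    IntegrableOn (fun x => x ^ s * gammaPDFReal t 1 x) (Ioi 0) := by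
  refine IntegrableOn.congr_fun ((GammaIntegral_convergent hst).div_const (Gamma t))
    (fun x (hx : 0 < x) => ?_) measurableSet_Ioi
  rw [gammaPDFReal_one_of_nonneg hx.le, add_sub_assoc, rpow_add hx]
  ring

lemma integrableOn_Ioi_gammaPDFReal_one (ht : 0 < t) (hu : 0 ≤ u) :
    IntegrableOn (gammaPDFReal t 1) (Ioi u) := by
  have h := integrableOn_rpow_mul_gammaPDFReal_one (s := 0) (by simpa using ht)
  simp only [rpow_zero, one_mul] at h
  exact h.mono_set (Ioi_subset_Ioi hu)

lemma intervalIntegrable_gammaPDFReal_one (ht : 0 < t) (hu : 0 ≤ u) :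
    IntervalIntegrable (gammaPDFReal t 1) volume 0 u :=
  (intervalIntegrable_iff_integrableOn_Ioc_of_le hu).2
    ((integrableOn_Ioi_gammaPDFReal_one ht le_rfl).mono_set Ioc_subset_Ioi_self)

lemma integral_Ioi_zero_gammaPDFReal_one (ht : 0 < t) :
    ∫ x in Ioi 0, gammaPDFReal t 1 x = 1 := by
  rw [setIntegral_congr_fun measurableSet_Ioi
      fun x (hx : 0 < x) => gammaPDFReal_one_of_nonneg hx.le, integral_div,
    div_eq_one_iff_eq (Gamma_pos_of_pos ht).ne', Gamma_eq_integral ht]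
  simp only [mul_comm]

lemma intervalIntegral_gammaPDFReal_one (hu : 0 ≤ u) :
    ∫ x in 0..u, gammaPDFReal t 1 x = lowerGamma t u := by
  rw [lowerGamma, ← intervalIntegral.integral_div]
  exact intervalIntegral.integral_congr_Ioo_of_le hu fun x hx =>
    gammaPDFReal_one_of_nonneg hx.1.le

lemma integral_Ioi_gammaPDFReal_one (ht : 0 < t) (hu : 0 ≤ u) :
    ∫ x in Ioi u, gammaPDFReal t 1 x = 1 - lowerGamma t u := by
  rw [eq_sub_iff_add_eq', ← intervalIntegral_gammaPDFReal_one hu,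
    intervalIntegral.integral_interval_add_Ioi (integrableOn_Ioi_gammaPDFReal_one ht le_rfl)
      (integrableOn_Ioi_gammaPDFReal_one ht hu),
    integral_Ioi_zero_gammaPDFReal_one ht]

end Gamma

section NegBinom

variable {ν : ℕ} {p x : ℝ}

lemma inv_mul_negBinomPMF (hν : ν ≠ 0) (hp : p ≠ 0) (n : ℕ) :
    p⁻¹ * negBinomPMF ν p n = (n - 1).choose (ν - 1) * p ^ (ν - 1) * (1 - p) ^ (n - ν) := by
  rw [negBinomPMF, ← mul_pow_sub_one hν p]
  field_simp

lemma tendsto_floor_div_atTop (hx : 0 < x) :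
    Tendsto (fun p : ℝ => ⌊x / p⌋₊) (𝓝[>] 0) atTop :=
  tendsto_nat_floor_atTop.comp <| (tendsto_inv_nhdsGT_zero.const_mul_atTop hx).congr
    fun p => (div_eq_mul_inv x p).symm

lemma tendsto_floor_div_mul (hx : 0 < x) :
    Tendsto (fun p : ℝ => (⌊x / p⌋₊ : ℝ) * p) (𝓝[>] 0) (𝓝 x) := by
  simpa [Function.comp_def, div_eq_mul_inv] using
    (tendsto_nat_floor_mul_div_atTop hx.le).comp tendsto_inv_nhdsGT_zero

lemma tendsto_floor_div_sub_mul (hx : 0 < x) (k : ℕ) :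
    Tendsto (fun p : ℝ => ((⌊x / p⌋₊ - k : ℕ) : ℝ) * p) (𝓝[>] 0) (𝓝 x) := by
  have hp : Tendsto (fun p : ℝ => p) (𝓝[>] 0) (𝓝 0) := nhdsWithin_le_nhds
  have h : Tendsto (fun p : ℝ => (⌊x / p⌋₊ : ℝ) * p - k * p) (𝓝[>] 0) (𝓝 x) := by
    simpa using (tendsto_floor_div_mul hx).sub (hp.const_mul (k : ℝ))
  refine h.congr' ?_
  filter_upwards [(tendsto_floor_div_atTop hx).eventually_ge_atTop k] with p hk
  rw [Nat.cast_sub hk, sub_mul]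

lemma tendsto_choose_mul_pow {ι : Type*} {l : Filter ι} {N : ι → ℕ} {p : ι → ℝ}
    (hN : Tendsto N l atTop) (hNp : Tendsto (fun i => N i * p i) l (𝓝 x)) (k : ℕ) :
    Tendsto (fun i => (N i).choose k * p i ^ k) l (𝓝 (x ^ k / k.factorial)) := by
  have hEquiv : (fun i => (N i).choose k * p i ^ k) ~[l]
      fun i => (N i * p i) ^ k / (k.factorial : ℝ) :=
    (((isEquivalent_choose k).comp_tendsto hN).mul IsEquivalent.refl).congr_right <|
      .of_forall fun i => by simp only [Pi.mul_apply, Function.comp_apply]; ring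
  exact hEquiv.symm.tendsto_nhds ((hNp.pow k).div_const _)

lemma tendsto_one_sub_pow {N : ℝ → ℕ}
    (hN : Tendsto (fun p => N p * p) (𝓝[>] 0) (𝓝 x)) :
    Tendsto (fun p => (1 - p) ^ N p) (𝓝[>] 0) (𝓝 (exp (-x))) := by
  have hBase : Tendsto (fun p : ℝ => (1 - p) ^ p⁻¹) (𝓝[>] 0) (𝓝 (exp (-1))) := by
    simpa [Function.comp_def, sub_eq_add_neg] using
      (tendsto_one_add_div_rpow_exp (-1)).comp tendsto_inv_nhdsGT_zero
  have h := hBase.rpow hN (Or.inl (exp_pos _).ne')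
  rw [← exp_mul, neg_one_mul] at h
  refine h.congr' ?_
  filter_upwards [Ioo_mem_nhdsGT one_pos] with p hp
  rw [← rpow_mul (by linarith [hp.2]), mul_comm, mul_inv_cancel_right₀ hp.1.ne', rpow_natCast]

lemma gammaPDFReal_natCast_one (hν : ν ≠ 0) (hx : 0 ≤ x) :
    gammaPDFReal ν 1 x = x ^ (ν - 1) / (ν - 1).factorial * exp (-x) := by
  obtain ⟨k, rfl⟩ := Nat.exists_eq_succ_of_ne_zero hν
  rw [gammaPDFReal_one_of_nonneg hx, Nat.cast_succ, add_sub_cancel_right, Gamma_nat_eq_factorial,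
    rpow_natCast, Nat.succ_sub_one]
  ring

lemma tendsto_inv_mul_negBinomPMF_floor (hν : ν ≠ 0) (hx : 0 < x) :
    Tendsto (fun p => p⁻¹ * negBinomPMF ν p ⌊x / p⌋₊) (𝓝[>] 0) (𝓝 (gammaPDFReal ν 1 x)) := by
  have hN : Tendsto (fun p : ℝ => ⌊x / p⌋₊ - 1) (𝓝[>] 0) atTop :=
    (tendsto_sub_atTop_nat 1).comp (tendsto_floor_div_atTop hx)
  have hChoose := tendsto_choose_mul_pow hN (tendsto_floor_div_sub_mul hx 1) (ν - 1)
  have hPow := tendsto_one_sub_pow (tendsto_floor_div_sub_mul hx ν)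
  rw [gammaPDFReal_natCast_one hν hx.le]
  refine (hChoose.mul hPow).congr' ?_
  filter_upwards [self_mem_nhdsWithin] with p hp
  exact (inv_mul_negBinomPMF hν (ne_of_gt hp) _).symm

lemma inv_mul_negBinomPMF_floor_le (hν : ν ≠ 0) (hp : 0 < p) (hp1 : p ≤ 1) (hx : 0 ≤ x)
    (hνx : ν ≤ ⌊x / p⌋₊) :
    p⁻¹ * negBinomPMF ν p ⌊x / p⌋₊ ≤ exp (ν + 1) * gammaPDFReal ν 1 x := by
  have hle : (⌊x / p⌋₊ : ℝ) * p ≤ x := (le_div_iff₀ hp).1 (Nat.floor_le (by positivity))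
  have hlt : x < (⌊x / p⌋₊ + 1) * p := (div_lt_iff₀ hp).1 (Nat.lt_floor_add_one _)
  rw [inv_mul_negBinomPMF hν hp.ne', gammaPDFReal_natCast_one hν hx]
  generalize ⌊x / p⌋₊ = n at *
  have hChoose : (n - 1).choose (ν - 1) * p ^ (ν - 1) ≤ x ^ (ν - 1) / (ν - 1).factorial :=
    calc ((n - 1).choose (ν - 1) : ℝ) * p ^ (ν - 1)
        ≤ (n : ℝ) ^ (ν - 1) / (ν - 1).factorial * p ^ (ν - 1) := by
          gcongr
          exact (Nat.cast_le.2 (Nat.choose_le_choose _ (Nat.sub_le n 1))).trans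
            (Nat.choose_le_pow_div _ _)
      _ = (n * p) ^ (ν - 1) / (ν - 1).factorial := by ring
      _ ≤ x ^ (ν - 1) / (ν - 1).factorial := by gcongr
  have hPow : (1 - p) ^ (n - ν) ≤ exp (ν + 1) * exp (-x) :=
    calc (1 - p) ^ (n - ν) ≤ exp (-p) ^ (n - ν) :=
          pow_le_pow_left₀ (sub_nonneg.2 hp1) (one_sub_le_exp_neg p) _
      _ = exp ((ν + 1) * p - (n + 1) * p) := by
          rw [← exp_nat_mul, Nat.cast_sub hνx]
          ring_nf
      _ ≤ exp ((ν + 1) + -x) := by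
          gcongr
          nlinarith
      _ = exp (ν + 1) * exp (-x) := exp_add _ _
  calc _ ≤ x ^ (ν - 1) / (ν - 1).factorial * (exp (ν + 1) * exp (-x)) :=
        mul_le_mul hChoose hPow (pow_nonneg (sub_nonneg.2 hp1) _) (by positivity)
    _ = _ := by ring

end NegBinom

section Risk

/-- The step function on `(0, ∞)` whose value on `[n p, (n + 1) p)` is the `n`-th term of the series
`risk ν L g p` divided by `p`, so that its integral is the risk. -/
noncomputable def riskStep (ν : ℕ) (L : ℝ → ℝ) (g : ℕ → ℝ) (p x : ℝ) : ℝ :=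
  p⁻¹ * if ν ≤ ⌊x / p⌋₊ then negBinomPMF ν p ⌊x / p⌋₊ * L (g ⌊x / p⌋₊ / p) else 0

variable {ν : ℕ} {L : ℝ → ℝ} {g : ℕ → ℝ} {Ω A C α β p x : ℝ}

lemma measurable_riskStep (ν : ℕ) (L : ℝ → ℝ) (g : ℕ → ℝ) (p : ℝ) :
    Measurable (riskStep ν L g p) :=
  (measurable_of_countable fun n : ℕ =>
    p⁻¹ * if ν ≤ n then negBinomPMF ν p n * L (g n / p) else 0).comp
      (Nat.measurable_floor.comp (measurable_id.div_const p))

lemma risk_eq_integral_riskStep (hp : 0 < p) (hInt : IntegrableOn (riskStep ν L g p) (Ioi 0)) :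
    risk ν L g p = ∫ x in Ioi 0, riskStep ν L g p x :=
  tsum_eq_integral_floor_div hp hInt

lemma tendsto_riskStep (hν : ν ≠ 0) (hx : 0 < x) (hL : ContinuousAt L (Ω / x))
    (hg : Tendsto (fun n : ℕ => n * g n) atTop (𝓝 Ω)) :
    Tendsto (fun p => riskStep ν L g p x) (𝓝[>] 0) (𝓝 (gammaPDFReal ν 1 x * L (Ω / x))) := by
  have hArg : Tendsto (fun p => g ⌊x / p⌋₊ / p) (𝓝[>] 0) (𝓝 (Ω / x)) := by
    refine ((hg.comp (tendsto_floor_div_atTop hx)).div (tendsto_floor_div_mul hx) hx.ne').congr' ?_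
    filter_upwards [(tendsto_floor_div_atTop hx).eventually_ne_atTop 0] with p hn
    exact mul_div_mul_left _ _ (Nat.cast_ne_zero.2 hn)
  refine ((tendsto_inv_mul_negBinomPMF_floor hν hx).mul (hL.tendsto.comp hArg)).congr' ?_
  filter_upwards [(tendsto_floor_div_atTop hx).eventually_ge_atTop ν] with p hn
  rw [riskStep, if_pos hn, ← mul_assoc, Function.comp_apply]

lemma nonneg_of_abs_le_rpow_add_rpow_neg
    (hL : ∀ y, 0 < y → |L y| ≤ C * (y ^ α + y ^ (-β))) : 0 ≤ C := by
  have h := (abs_nonneg _).trans (hL 1 one_pos)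
  simp only [one_rpow] at h
  linarith

lemma abs_comp_div_le {n : ℕ} (hα : 0 ≤ α) (hβ : 0 ≤ β)
    (hL : ∀ y, 0 < y → |L y| ≤ C * (y ^ α + y ^ (-β)))
    (hp : 0 < p) (hn : n ≠ 0) (hnp : n * p ≤ x) (hxn : x < (n + 1) * p)
    (hg : 0 < g n) (hgA : n * g n ≤ A) (hgA' : (n * g n)⁻¹ ≤ A) :
    |L (g n / p)| ≤ C * ((2 * A / x) ^ α + (A * x) ^ β) := by
  have hC : 0 ≤ C := nonneg_of_abs_le_rpow_add_rpow_neg hL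
  have hn1 : (1 : ℝ) ≤ n := Nat.one_le_cast.2 (Nat.one_le_iff_ne_zero.2 hn)
  have hx : 0 < x := lt_of_lt_of_le (by positivity) hnp
  have hA : 0 ≤ A := le_trans (by positivity) hgA
  have hUpper : g n / p ≤ 2 * A / x := by
    rw [div_le_div_iff₀ hp hx]
    calc g n * x ≤ g n * (2 * (n * p)) := by gcongr; nlinarith
      _ = 2 * (n * g n) * p := by ring
      _ ≤ 2 * A * p := by gcongr
  have hLower : (g n / p)⁻¹ ≤ A * x :=
    calc (g n / p)⁻¹ = (n * g n)⁻¹ * (n * p) := by field_simp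
      _ ≤ A * x := by gcongr
  refine (hL _ (div_pos hg hp)).trans ?_
  rw [rpow_neg (by positivity), ← inv_rpow (by positivity)]
  gcongr

/-- The integrable function dominating `riskStep` uniformly in `p`, for a loss `L` with
`|L y| ≤ C (y ^ α + y ^ (-β))` and an estimator `g` with `A⁻¹ ≤ n g(n) ≤ A`. -/
noncomputable def riskEnvelope (ν : ℕ) (C A α β x : ℝ) : ℝ :=
  exp (ν + 1) * gammaPDFReal ν 1 x * (C * ((2 * A / x) ^ α + (A * x) ^ β))

lemma integrableOn_riskEnvelope (hA : 0 ≤ A) (hα : α < ν) (hβ : 0 < β + ν) :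
    IntegrableOn (riskEnvelope ν C A α β) (Ioi 0) := by
  have hSmall := integrableOn_rpow_mul_gammaPDFReal_one (s := -α) (t := ν) (by linarith)
  have hLarge := integrableOn_rpow_mul_gammaPDFReal_one hβ
  refine IntegrableOn.congr_fun (((hSmall.const_mul ((2 * A) ^ α)).add
    (hLarge.const_mul (A ^ β))).const_mul (exp (ν + 1) * C)) (fun x (hx : 0 < x) => ?_)
    measurableSet_Ioi
  rw [riskEnvelope, div_rpow (by positivity) hx.le, mul_rpow hA hx.le]
  simp only [Pi.add_apply, rpow_neg hx.le]
  ring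

lemma abs_riskStep_le (hν : ν ≠ 0) (hα : 0 ≤ α) (hβ : 0 ≤ β)
    (hL : ∀ y, 0 < y → |L y| ≤ C * (y ^ α + y ^ (-β))) (hg : ∀ n, ν ≤ n → 0 < g n)
    (hgA : ∀ n : ℕ, n * g n ≤ A) (hgA' : ∀ n : ℕ, (n * g n)⁻¹ ≤ A)
    (hp : 0 < p) (hp1 : p ≤ 1) (hx : 0 < x) :
    |riskStep ν L g p x| ≤ riskEnvelope ν C A α β x := by
  have hC : 0 ≤ C := nonneg_of_abs_le_rpow_add_rpow_neg hL
  have hA : 0 ≤ A := by simpa using hgA 0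
  have hGamma : 0 ≤ gammaPDFReal ν 1 x :=
    gammaPDFReal_nonneg (Nat.cast_pos.2 (Nat.pos_of_ne_zero hν)) one_pos x
  rw [riskStep, riskEnvelope]
  split_ifs with hn
  · have hPMF : 0 ≤ negBinomPMF ν p ⌊x / p⌋₊ :=
      mul_nonneg (by positivity) (pow_nonneg (sub_nonneg.2 hp1) _)
    rw [← mul_assoc, abs_mul, abs_of_nonneg (mul_nonneg (inv_nonneg.2 hp.le) hPMF)]
    refine mul_le_mul (inv_mul_negBinomPMF_floor_le hν hp hp1 hx.le hn) ?_ (abs_nonneg _)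
      (by positivity)
    exact abs_comp_div_le hα hβ hL hp (by lia) ((le_div_iff₀ hp).1 (Nat.floor_le (by positivity)))
      ((div_lt_iff₀ hp).1 (Nat.lt_floor_add_one _)) (hg _ hn) (hgA _) (hgA' _)
  · rw [mul_zero, abs_zero]
    positivity

lemma exists_forall_mul_le_and_inv_le (hΩ : Ω ≠ 0)
    (hg : Tendsto (fun n : ℕ => n * g n) atTop (𝓝 Ω)) :
    ∃ A, (∀ n : ℕ, n * g n ≤ A) ∧ ∀ n : ℕ, (n * g n)⁻¹ ≤ A := by
  obtain ⟨A, hA⟩ := hg.bddAbove_range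
  obtain ⟨B, hB⟩ := (hg.inv₀ hΩ).bddAbove_range
  exact ⟨max A B, fun n => le_max_of_le_left (hA (mem_range_self n)),
    fun n => le_max_of_le_right (hB (mem_range_self n))⟩

theorem tendsto_risk (hΩ : 0 < Ω) (hα : 0 ≤ α) (hαν : α < ν) (hβ : 0 ≤ β)
    (hLc : ContinuousOn L (Ioi 0)) (hL : ∀ y, 0 < y → |L y| ≤ C * (y ^ α + y ^ (-β)))
    (hg0 : ∀ n, ν ≤ n → 0 < g n) (hg : Tendsto (fun n : ℕ => n * g n) atTop (𝓝 Ω)) :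
    Tendsto (risk ν L g) (𝓝[>] 0) (𝓝 (∫ x in Ioi 0, gammaPDFReal ν 1 x * L (Ω / x))) := by
  obtain ⟨A, hgA, hgA'⟩ := exists_forall_mul_le_and_inv_le hΩ.ne' hg
  have hν : ν ≠ 0 := Nat.cast_ne_zero.1 (hα.trans_lt hαν).ne'
  have hEnvelope : IntegrableOn (riskEnvelope ν C A α β) (Ioi 0) :=
    integrableOn_riskEnvelope (by simpa using hgA 0) hαν (by linarith)
  have hBound : ∀ᶠ p in 𝓝[>] (0 : ℝ), 0 < p ∧ ∀ᵐ x ∂volume.restrict (Ioi 0),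
      ‖riskStep ν L g p x‖ ≤ riskEnvelope ν C A α β x := by
    filter_upwards [Ioo_mem_nhdsGT one_pos] with p hp
    exact ⟨hp.1, ae_restrict_of_forall_mem measurableSet_Ioi fun x hx =>
      abs_riskStep_le hν hα hβ hL hg0 hgA hgA' hp.1 hp.2.le hx⟩
  have hMeas (p : ℝ) : AEStronglyMeasurable (riskStep ν L g p) (volume.restrict (Ioi 0)) :=
    (measurable_riskStep ν L g p).aestronglyMeasurable
  have hIntegral : Tendsto (fun p => ∫ x in Ioi 0, riskStep ν L g p x) (𝓝[>] 0)
      (𝓝 (∫ x in Ioi 0, gammaPDFReal ν 1 x * L (Ω / x))) := by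
    refine tendsto_integral_filter_of_dominated_convergence _ (.of_forall hMeas)
      (hBound.mono fun p hp => hp.2) hEnvelope ?_
    exact ae_restrict_of_forall_mem measurableSet_Ioi fun x hx =>
      tendsto_riskStep hν hx (hLc.continuousAt (Ioi_mem_nhds (div_pos hΩ hx))) hg
  refine hIntegral.congr' ?_
  filter_upwards [hBound] with p ⟨hp, hle⟩
  exact (risk_eq_integral_riskStep hp (hEnvelope.mono' (hMeas p) hle)).symm

end Risk

section InvLinLoss

variable {Ω t : ℝ}

lemma invLinLoss_eq_min_max (a b x : ℝ) :
    invLinLoss a b x = a * (1 / min x 1 - 1) + b * (max x 1 - 1) := by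
  rw [invLinLoss]
  split_ifs with h
  · simp [h]
  · simp [le_of_not_ge h]

lemma continuousOn_invLinLoss (a b : ℝ) : ContinuousOn (invLinLoss a b) (Ioi 0) := by
  have hMin (x : ℝ) (hx : x ∈ Ioi 0) : min x 1 ≠ 0 := (lt_min hx one_pos).ne'
  simp only [funext (invLinLoss_eq_min_max a b)]
  fun_prop (disch := assumption)

lemma abs_invLinLoss_le (a b : ℝ) {x : ℝ} (hx : 0 < x) :
    |invLinLoss a b x| ≤ (|a| + |b|) * (x + x⁻¹) := by
  have hinv : 0 < x⁻¹ := inv_pos.2 hx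
  rw [invLinLoss, one_div]
  split_ifs with h
  · have h1 : 1 ≤ x⁻¹ := (one_le_inv₀ hx).2 h
    rw [abs_mul, abs_of_nonneg (sub_nonneg.2 h1)]
    nlinarith [abs_nonneg a, abs_nonneg b]
  · rw [abs_mul, abs_of_pos (sub_pos.2 (not_le.1 h))]
    nlinarith [abs_nonneg a, abs_nonneg b]

lemma eqOn_Ioo_gammaPDFReal_mul_invLinLoss (Ω a b : ℝ) (ht : t ≠ 1) :
    EqOn (fun x => gammaPDFReal t 1 x * invLinLoss a b (Ω / x))
      (fun x => b * Ω / (t - 1) * gammaPDFReal (t - 1) 1 x - b * gammaPDFReal t 1 x)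
      (Ioo 0 Ω) := by
  intro x hx
  have ht' : t - 1 ≠ 0 := sub_ne_zero.2 ht
  have hShift := mul_gammaPDFReal_one ht' hx.1
  have hx0 : x ≠ 0 := hx.1.ne'
  rw [sub_add_cancel] at hShift
  simp only [invLinLoss, if_neg (not_le.2 ((one_lt_div hx.1).2 hx.2))]
  field_simp
  linear_combination (-b * Ω) * hShift

lemma eqOn_Ioi_gammaPDFReal_mul_invLinLoss (a b : ℝ) (ht : t ≠ 0) (hΩ : 0 < Ω) :
    EqOn (fun x => gammaPDFReal t 1 x * invLinLoss a b (Ω / x))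
      (fun x => a * t / Ω * gammaPDFReal (t + 1) 1 x - a * gammaPDFReal t 1 x) (Ioi Ω) := by
  intro x hx
  have hx0 : 0 < x := hΩ.trans hx
  simp only [invLinLoss, if_pos ((div_le_one hx0).2 (le_of_lt hx))]
  field_simp
  linear_combination a * mul_gammaPDFReal_one ht hx0

lemma intervalIntegrable_gammaPDFReal_mul_invLinLoss (a b : ℝ) (ht : 1 < t) (hΩ : 0 ≤ Ω) :
    IntervalIntegrable (fun x => gammaPDFReal t 1 x * invLinLoss a b (Ω / x)) volume 0 Ω := by
  have hPrev := intervalIntegrable_gammaPDFReal_one (sub_pos.2 ht) hΩ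
  have hSelf := intervalIntegrable_gammaPDFReal_one (one_pos.trans ht) hΩ
  refine ((hPrev.const_mul (b * Ω / (t - 1))).sub (hSelf.const_mul b)).congr_uIoo ?_
  rw [uIoo_of_le hΩ]
  exact (eqOn_Ioo_gammaPDFReal_mul_invLinLoss Ω a b ht.ne').symm

lemma intervalIntegral_gammaPDFReal_mul_invLinLoss (a b : ℝ) (ht : 1 < t) (hΩ : 0 ≤ Ω) :
    ∫ x in 0..Ω, gammaPDFReal t 1 x * invLinLoss a b (Ω / x) =
      b * Ω / (t - 1) * lowerGamma (t - 1) Ω - b * lowerGamma t Ω := by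
  have hPrev := intervalIntegrable_gammaPDFReal_one (sub_pos.2 ht) hΩ
  have hSelf := intervalIntegrable_gammaPDFReal_one (one_pos.trans ht) hΩ
  rw [intervalIntegral.integral_congr_Ioo_of_le hΩ
      (eqOn_Ioo_gammaPDFReal_mul_invLinLoss Ω a b ht.ne'),
    intervalIntegral.integral_sub (hPrev.const_mul _) (hSelf.const_mul _),
    intervalIntegral.integral_const_mul, intervalIntegral.integral_const_mul,
    intervalIntegral_gammaPDFReal_one hΩ, intervalIntegral_gammaPDFReal_one hΩ]

lemma integrableOn_Ioi_gammaPDFReal_mul_invLinLoss (a b : ℝ) (ht : 0 < t) (hΩ : 0 < Ω) :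
    IntegrableOn (fun x => gammaPDFReal t 1 x * invLinLoss a b (Ω / x)) (Ioi Ω) := by
  have hNext := integrableOn_Ioi_gammaPDFReal_one (add_pos ht one_pos) hΩ.le
  have hSelf := integrableOn_Ioi_gammaPDFReal_one ht hΩ.le
  exact IntegrableOn.congr_fun ((hNext.const_mul (a * t / Ω)).sub (hSelf.const_mul a))
    (eqOn_Ioi_gammaPDFReal_mul_invLinLoss a b ht.ne' hΩ).symm measurableSet_Ioi

lemma integral_Ioi_gammaPDFReal_mul_invLinLoss (a b : ℝ) (ht : 0 < t) (hΩ : 0 < Ω) :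
    ∫ x in Ioi Ω, gammaPDFReal t 1 x * invLinLoss a b (Ω / x) =
      a * t / Ω * (1 - lowerGamma (t + 1) Ω) - a * (1 - lowerGamma t Ω) := by
  have hNext := integrableOn_Ioi_gammaPDFReal_one (add_pos ht one_pos) hΩ.le
  have hSelf := integrableOn_Ioi_gammaPDFReal_one ht hΩ.le
  rw [setIntegral_congr_fun measurableSet_Ioi
      (eqOn_Ioi_gammaPDFReal_mul_invLinLoss a b ht.ne' hΩ),
    integral_sub (hNext.const_mul _) (hSelf.const_mul _), integral_const_mul,
    integral_const_mul, integral_Ioi_gammaPDFReal_one (add_pos ht one_pos) hΩ.le,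
    integral_Ioi_gammaPDFReal_one ht hΩ.le]

lemma integral_gammaPDFReal_mul_invLinLoss (a b : ℝ) (ht : 1 < t) (hΩ : 0 < Ω) :
    ∫ x in Ioi 0, gammaPDFReal t 1 x * invLinLoss a b (Ω / x) =
      b * Ω * lowerGamma (t - 1) Ω / (t - 1) + (a - b) * lowerGamma t Ω -
        a * t * lowerGamma (t + 1) Ω / Ω + a * (t / Ω - 1) := by
  have ht0 : 0 < t := one_pos.trans ht
  rw [← intervalIntegral.integral_interval_add_Ioi'
      (intervalIntegrable_gammaPDFReal_mul_invLinLoss a b ht hΩ.le)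
      (integrableOn_Ioi_gammaPDFReal_mul_invLinLoss a b ht0 hΩ),
    intervalIntegral_gammaPDFReal_mul_invLinLoss a b ht hΩ.le,
    integral_Ioi_gammaPDFReal_mul_invLinLoss a b ht0 hΩ]
  ring

end InvLinLoss

lemma tendsto_natCast_mul_div_add (Ω d : ℝ) :
    Tendsto (fun n : ℕ => n * (Ω / ((n : ℝ) + d))) atTop (𝓝 Ω) := by
  simpa [mul_div_left_comm] using (tendsto_natCast_div_add_atTop d).const_mul Ω

theorem stmt8_general (ν : ℕ) (hν : 2 ≤ ν) (a b Ω : ℝ) (hΩ : 0 < Ω) (g : ℕ → ℝ)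
    (hg0 : ∀ n, ν ≤ n → 0 < g n) (hg : Tendsto (fun n : ℕ => n * g n) atTop (𝓝 Ω)) :
    Tendsto (risk ν (invLinLoss a b) g) (𝓝[>] 0)
      (𝓝 (b * Ω * lowerGamma ((ν : ℝ) - 1) Ω / ((ν : ℝ) - 1) +
        (a - b) * lowerGamma (ν : ℝ) Ω -
        a * (ν : ℝ) * lowerGamma ((ν : ℝ) + 1) Ω / Ω + a * ((ν : ℝ) / Ω - 1))) := by
  have hν1 : (1 : ℝ) < ν := Nat.one_lt_cast.2 hν
  rw [← integral_gammaPDFReal_mul_invLinLoss a b hν1 hΩ]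
  refine tendsto_risk (C := |a| + |b|) (α := 1) (β := 1) hΩ zero_le_one hν1 zero_le_one
    (continuousOn_invLinLoss a b) (fun y hy => ?_) hg0 hg
  simpa only [rpow_one, rpow_neg_one] using abs_invLinLoss_le a b hy

theorem stmt8 (ν : ℕ) (hν : 2 ≤ ν) (a b : ℝ) (ha : 0 ≤ a) (hb : 0 ≤ b)
    (hab : (a, b) ≠ (0, 0)) (Ω d : ℝ) (hΩ : 0 < Ω) (hd : -(ν : ℝ) < d) :
    Filter.Tendsto (risk ν (invLinLoss a b) (fun n => Ω / ((n : ℝ) + d)))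
      (nhdsWithin 0 (Set.Ioi 0))
      (nhds (b * Ω * lowerGamma ((ν : ℝ) - 1) Ω / ((ν : ℝ) - 1) +
        (a - b) * lowerGamma (ν : ℝ) Ω -
        a * (ν : ℝ) * lowerGamma ((ν : ℝ) + 1) Ω / Ω + a * ((ν : ℝ) / Ω - 1))) :=
  stmt8_general ν hν a b Ω hΩ _
    (fun n hn => div_pos hΩ (by linarith [(Nat.cast_le (α := ℝ)).2 hn]))
    (tendsto_natCast_mul_div_add Ω d)
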